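/- arXiv:2001.07153 — 2 statements merged into one kernel-verified Lean document; each statement's English description precedes it below -/
import Mathlib

section
/- In the Simmons noiseless message-authentication model, the success probability of an impersonation attack is lower bounded by exp(−I(K;W)), where I denotes mutual information (with natural logarithm). Precisely: let K and M be independent random variables on a probability space, taking values in nonempty finite sets 𝒦 (keys) and ℳ (messages), let f : 𝒦 × ℳ → 𝒲 be an encoding function into a finite set 𝒲 such that f(k,·) is injective for every key k, and let W = f(K,M) be the transmitted signal. Define the impersonation success probability P_I = max_{w∈𝒲} ℙ[∃ m ∈ ℳ, f(K,m) = w]. Then P_I ≥ exp(−I[K : W]). -/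
/-!
For finite probability vectors `p` and `q` with `q > 0` on `supp p`, Jensen's inequality gives
`exp (-D(p ‖ q)) = exp (∑ p * log (q / p)) ≤ ∑ p * (q / p) = q (supp p)`. Take for `p` the joint law
of `(K, W)` and for `q` the product of its marginals, so that `D(p ‖ q) = I[K : W]`. If a relation
`R (K, W)` holds almost surely, then `supp p ⊆ R`, so `exp (-I[K : W])` is at most
`∑ w, ℙ[R (K, w)] * ℙ[W = w]`, which is at most the maximum of `ℙ[R (K, w)]` over `w`. In
authentication, `R k w` says that the receiver with key `k` accepts `w`, that is, `∃ m, f k m = w`.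
-/

open MeasureTheory ProbabilityTheory Real

namespace Simmons

variable {Ω : Type*} [MeasureSpace Ω]

/-- Shannon entropy (natural logarithm) of a random variable with values in a finite set. -/
noncomputable def entropy {S : Type*} [Fintype S] (X : Ω → S) : ℝ :=
  ∑ s : S, Real.negMulLog ((ℙ (X ⁻¹' {s})).toReal)

/-- Conditional Shannon entropy `H[X | Y] = H[(X, Y)] - H[Y]` (natural logarithm). -/
noncomputable def condEntropy {S T : Type*} [Fintype S] [Fintype T]
    (X : Ω → S) (Y : Ω → T) : ℝ :=
  entropy (fun ω => (X ω, Y ω)) - entropy Y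

/-- Mutual information `I[X : Y] = H[X] - H[X | Y]` (natural logarithm). -/
noncomputable def mutualInfo {S T : Type*} [Fintype S] [Fintype T]
    (X : Ω → S) (Y : Ω → T) : ℝ :=
  entropy X - condEntropy X Y

end Simmons

open Simmons

lemma exp_neg_sum_mul_log_div_le {ι : Type*} (s : Finset ι) {p q : ι → ℝ}
    (hp : ∀ i ∈ s, 0 ≤ p i) (hsum : ∑ i ∈ s, p i = 1) (hq : ∀ i ∈ s, p i ≠ 0 → 0 < q i) :
    exp (-∑ i ∈ s, p i * log (p i / q i)) ≤ ∑ i ∈ s with p i ≠ 0, q i :=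
  calc exp (-∑ i ∈ s, p i * log (p i / q i))
      = exp (∑ i ∈ s, p i • log (q i / p i)) := by
        simp only [← Finset.sum_neg_distrib, ← mul_neg, ← log_inv, inv_div, smul_eq_mul]
    _ ≤ ∑ i ∈ s, p i • exp (log (q i / p i)) :=
        convexOn_exp.map_sum_le hp hsum fun _ _ => Set.mem_univ _
    _ = ∑ i ∈ s with p i ≠ 0, q i := by
        rw [Finset.sum_filter]
        refine Finset.sum_congr rfl fun i hi => ?_
        split_ifs with h
        · have hpi : 0 < p i := (hp i hi).lt_of_ne' h
          rw [exp_log (div_pos (hq i hi h) hpi), smul_eq_mul, mul_div_cancel₀ _ h]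
        · rw [not_not.mp h, zero_smul]

lemma sum_measureReal_inter_preimage_singleton {Ω S : Type*} [MeasurableSpace Ω]
    (μ : Measure Ω) [IsFiniteMeasure μ] [Fintype S] {X : Ω → S}
    (hX : ∀ s, MeasurableSet (X ⁻¹' {s})) (A : Set Ω) :
    ∑ s, μ.real (A ∩ X ⁻¹' {s}) = μ.real A := by
  have h := sum_measureReal_preimage_singleton (μ := μ.restrict A) Finset.univ fun s _ => hX s
  simpa only [measureReal_restrict_apply (hX _), Set.inter_comm A, Finset.coe_univ,
    Set.preimage_univ, measureReal_restrict_apply_univ] using h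

section MutualInformation

variable {Ω S T : Type*} [MeasureSpace Ω] [Fintype S] [Fintype T] {X : Ω → S} {Y : Ω → T}

lemma mutualInfo_eq_sum_mul_log_div [IsFiniteMeasure (ℙ : Measure Ω)]
    (hX : ∀ s, MeasurableSet (X ⁻¹' {s})) (hY : ∀ t, MeasurableSet (Y ⁻¹' {t})) :
    mutualInfo X Y = ∑ x : S × T, volume.real (X ⁻¹' {x.1} ∩ Y ⁻¹' {x.2}) *
      log (volume.real (X ⁻¹' {x.1} ∩ Y ⁻¹' {x.2}) /
        (volume.real (X ⁻¹' {x.1}) * volume.real (Y ⁻¹' {x.2}))) := by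
  have hXY : entropy (fun ω => (X ω, Y ω)) =
      ∑ x : S × T, negMulLog (volume.real (X ⁻¹' {x.1} ∩ Y ⁻¹' {x.2})) := by
    simp only [entropy, measureReal_def, ← Set.mk_preimage_prod, Set.singleton_prod_singleton]
  have hmarginalX : entropy X =
      -∑ x : S × T, volume.real (X ⁻¹' {x.1} ∩ Y ⁻¹' {x.2}) * log (volume.real (X ⁻¹' {x.1})) := by
    simp only [entropy, negMulLog, ← measureReal_def, Fintype.sum_prod_type, ← Finset.sum_mul,
      sum_measureReal_inter_preimage_singleton ℙ hY, neg_mul, Finset.sum_neg_distrib]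
  have hmarginalY : entropy Y =
      -∑ x : S × T, volume.real (X ⁻¹' {x.1} ∩ Y ⁻¹' {x.2}) * log (volume.real (Y ⁻¹' {x.2})) := by
    simp only [entropy, negMulLog, ← measureReal_def, Fintype.sum_prod_type_right,
      ← Finset.sum_mul, Set.inter_comm (X ⁻¹' _), sum_measureReal_inter_preimage_singleton ℙ hX,
      neg_mul, Finset.sum_neg_distrib]
  rw [mutualInfo, condEntropy, hXY, hmarginalX, hmarginalY, ← Finset.sum_neg_distrib,
    ← Finset.sum_neg_distrib, ← Finset.sum_sub_distrib, ← Finset.sum_sub_distrib]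
  refine Finset.sum_congr rfl fun x _ => ?_
  rcases eq_or_ne (volume.real (X ⁻¹' {x.1} ∩ Y ⁻¹' {x.2})) 0 with h | h
  · simp only [h, negMulLog_zero, zero_mul, neg_zero, sub_zero]
  · have hx : volume.real (X ⁻¹' {x.1}) ≠ 0 := fun h0 =>
      h (measureReal_mono_null Set.inter_subset_left h0)
    have hy : volume.real (Y ⁻¹' {x.2}) ≠ 0 := fun h0 =>
      h (measureReal_mono_null Set.inter_subset_right h0)
    rw [log_div h (mul_ne_zero hx hy), log_mul hx hy, negMulLog]
    ring

lemma exp_neg_mutualInfo_le_sum [IsProbabilityMeasure (ℙ : Measure Ω)]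
    (hX : ∀ s, MeasurableSet (X ⁻¹' {s})) (hY : ∀ t, MeasurableSet (Y ⁻¹' {t})) :
    exp (-mutualInfo X Y) ≤ ∑ x : S × T with volume.real (X ⁻¹' {x.1} ∩ Y ⁻¹' {x.2}) ≠ 0,
      volume.real (X ⁻¹' {x.1}) * volume.real (Y ⁻¹' {x.2}) := by
  rw [mutualInfo_eq_sum_mul_log_div hX hY]
  refine exp_neg_sum_mul_log_div_le Finset.univ (fun _ _ => measureReal_nonneg) ?_ fun x _ h => ?_
  · have htotal := sum_measureReal_inter_preimage_singleton ℙ hX Set.univ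
    simpa only [Fintype.sum_prod_type, sum_measureReal_inter_preimage_singleton ℙ hY,
      Set.univ_inter, probReal_univ] using htotal
  · have hpos := measureReal_nonneg.lt_of_ne' h
    exact mul_pos (hpos.trans_le (measureReal_mono Set.inter_subset_left))
      (hpos.trans_le (measureReal_mono Set.inter_subset_right))

end MutualInformation

theorem impersonation_lower_bound_general {Ω 𝒦 𝒲 : Type*} [MeasureSpace Ω]
    [IsProbabilityMeasure (ℙ : Measure Ω)] [Fintype 𝒦] [Fintype 𝒲] {K : Ω → 𝒦} {W : Ω → 𝒲}
    (hK : ∀ k, MeasurableSet (K ⁻¹' {k})) (hW : ∀ w, MeasurableSet (W ⁻¹' {w}))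
    (R : 𝒦 → 𝒲 → Prop) (hR : ∀ᵐ ω, R (K ω) (W ω)) :
    exp (-mutualInfo K W) ≤ ⨆ w, volume.real {ω | R (K ω) w} := by
  classical
  have hsupp {k : 𝒦} {w : 𝒲} (h : volume.real (K ⁻¹' {k} ∩ W ⁻¹' {w}) ≠ 0) : R k w := by
    contrapose! h
    refine measureReal_mono_null ?_ ((measureReal_eq_zero_iff).mpr (ae_iff.mp hR))
    rintro ω ⟨rfl, rfl⟩
    exact h
  calc exp (-mutualInfo K W)
      ≤ ∑ x : 𝒦 × 𝒲 with volume.real (K ⁻¹' {x.1} ∩ W ⁻¹' {x.2}) ≠ 0,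
          volume.real (K ⁻¹' {x.1}) * volume.real (W ⁻¹' {x.2}) := exp_neg_mutualInfo_le_sum hK hW
    _ ≤ ∑ x : 𝒦 × 𝒲 with R x.1 x.2, volume.real (K ⁻¹' {x.1}) * volume.real (W ⁻¹' {x.2}) :=
        Finset.sum_le_sum_of_subset_of_nonneg
          (Finset.monotone_filter_right _ fun _ _ h => hsupp h) fun _ _ _ => by positivity
    _ = ∑ w, volume.real {ω | R (K ω) w} * volume.real (W ⁻¹' {w}) := by
        simp only [Finset.sum_filter, Fintype.sum_prod_type_right]
        refine Finset.sum_congr rfl fun w _ => ?_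
        rw [← Finset.sum_filter, ← Finset.sum_mul,
          sum_measureReal_preimage_singleton _ fun k _ => hK k]
        simp only [Finset.coe_filter_univ, Set.preimage_ofPred_eq]
    _ ≤ ∑ w, (⨆ w, volume.real {ω | R (K ω) w}) * volume.real (W ⁻¹' {w}) := by
        gcongr with w
        exact le_ciSup (f := fun w => volume.real {ω | R (K ω) w}) (Set.finite_range _).bddAbove w
    _ = ⨆ w, volume.real {ω | R (K ω) w} := by
        rw [← Finset.mul_sum, sum_measureReal_preimage_singleton _ fun w _ => hW w,
          Finset.coe_univ, Set.preimage_univ, probReal_univ, mul_one]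

/-- **Simmons' impersonation bound.** In the noiseless message-authentication model with
transmitted signal `W = f(K, M)`, the success probability of an impersonation attack,
`P_I = max_{w} ℙ[∃ m, f(K, m) = w]`, is lower bounded by `exp (-I[K : W])`. -/
theorem impersonation_lower_bound
    {Ω : Type*} [MeasureSpace Ω] [IsProbabilityMeasure (ℙ : Measure Ω)]
    {𝒦 ℳ 𝒲 : Type*} [Fintype 𝒦] [Nonempty 𝒦] [Fintype ℳ] [Nonempty ℳ]
    [Fintype 𝒲] [Nonempty 𝒲]
    [MeasurableSpace 𝒦] [MeasurableSingletonClass 𝒦]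
    [MeasurableSpace ℳ] [MeasurableSingletonClass ℳ]
    (K : Ω → 𝒦) (M : Ω → ℳ) (hK : Measurable K) (hM : Measurable M)
    (hKM : IndepFun K M ℙ)
    (f : 𝒦 → ℳ → 𝒲) (hf : ∀ k, Function.Injective (f k))
    (W : Ω → 𝒲) (hW : ∀ ω, W ω = f (K ω) (M ω))
    (P_I : ℝ) (hPI : P_I = ⨆ w : 𝒲, (ℙ {ω | ∃ m, f (K ω) m = w}).toReal) :
    P_I ≥ Real.exp (-(mutualInfo K W)) := by
  obtain rfl : W = fun ω => f (K ω) (M ω) := funext hW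
  have hWs (w : 𝒲) : MeasurableSet ((fun ω => f (K ω) (M ω)) ⁻¹' {w}) :=
    (hK.prodMk hM) (Set.toFinite {x : 𝒦 × ℳ | f x.1 x.2 = w}).measurableSet
  rw [hPI]
  exact impersonation_lower_bound_general (fun k => hK (measurableSet_singleton k)) hWs
    (fun k w => ∃ m, f k m = w) (ae_of_all _ fun ω => ⟨M ω, rfl⟩)
end

section
/- In the Simmons noiseless message-authentication model, the deception probability is lower bounded by the inverse square root of the key-space size: with K, M independent random variables valued in nonempty finite sets 𝒦 and ℳ, f : 𝒦 × ℳ → 𝒲 an encoding into a finite set 𝒲 with f(k,·) injective for every k, W = f(K,M), impersonation success probability P_I = max_{w} ℙ[∃ m, f(K,m) = w] and substitution success probability P_S = Σ_{w} ℙ[W = w] · max_{w'≠w} ℙ[∃ m, f(K,m) = w' | W = w], assuming P_I ≥ exp(−I[K:W]) and P_S ≥ exp(−H[K|W]), one has max(P_I, P_S) ≥ (card 𝒦)^{−1/2}. -/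
/-!
The two exponents add up to the entropy of the key, `I[K:W] + H[K|W] = H[K]`, which is at most
`log (card 𝒦)` by Jensen's inequality. Hence the smaller exponent is at most `log (card 𝒦) / 2`.
-/

open MeasureTheory ProbabilityTheory Real

open Simmons

namespace Simmons

lemma sum_negMulLog_le {ι : Type*} (s : Finset ι) {p : ι → ℝ} (hp : ∀ i ∈ s, 0 ≤ p i) :
    ∑ i ∈ s, negMulLog (p i) ≤ negMulLog (∑ i ∈ s, p i) + (∑ i ∈ s, p i) * log s.card := by
  rcases s.eq_empty_or_nonempty with rfl | hs
  · simp
  have hcard : (0 : ℝ) < s.card := by exact_mod_cast hs.card_pos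
  have jensen : (s.card : ℝ)⁻¹ * ∑ i ∈ s, negMulLog (p i) ≤
      negMulLog ((s.card : ℝ)⁻¹ * ∑ i ∈ s, p i) := by
    simpa only [smul_eq_mul, Finset.mul_sum] using
      concaveOn_negMulLog.le_map_sum (t := s) (w := fun _ => (s.card : ℝ)⁻¹)
        (fun _ _ => (inv_pos.2 hcard).le) (by simp [hcard.ne']) hp
  calc ∑ i ∈ s, negMulLog (p i)
      ≤ s.card * negMulLog ((s.card : ℝ)⁻¹ * ∑ i ∈ s, p i) := (inv_mul_le_iff₀ hcard).1 jensen
    _ = negMulLog (∑ i ∈ s, p i) + (∑ i ∈ s, p i) * log s.card := by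
        rw [negMulLog_mul, negMulLog, log_inv]
        field_simp
        ring

section

variable {Ω : Type*} [MeasureSpace Ω] {S T : Type*} [Fintype S] [Fintype T]

lemma mutualInfo_add_condEntropy (X : Ω → S) (Y : Ω → T) :
    mutualInfo X Y + condEntropy X Y = entropy X :=
  sub_add_cancel _ _

lemma entropy_le_log_card [IsProbabilityMeasure (ℙ : Measure Ω)]
    [MeasurableSpace S] [MeasurableSingletonClass S] {X : Ω → S} (hX : Measurable X) :
    entropy X ≤ log (Fintype.card S) := by
  have hsum : ∑ s : S, (ℙ (X ⁻¹' {s})).toReal = 1 := by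
    simpa [Measure.real] using sum_measureReal_preimage_singleton (μ := (ℙ : Measure Ω))
      Finset.univ fun s _ => hX (measurableSet_singleton s)
  simpa [hsum, entropy] using sum_negMulLog_le Finset.univ
    (p := fun s : S => (ℙ (X ⁻¹' {s})).toReal) fun _ _ => ENNReal.toReal_nonneg

end

end Simmons

theorem deception_lower_bound_general
    {Ω : Type*} [MeasureSpace Ω] [IsProbabilityMeasure (ℙ : Measure Ω)]
    {𝒦 𝒲 : Type*} [Fintype 𝒦] [Fintype 𝒲] [MeasurableSpace 𝒦] [MeasurableSingletonClass 𝒦]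
    {K : Ω → 𝒦} (hK : Measurable K) (W : Ω → 𝒲) :
    (Fintype.card 𝒦 : ℝ) ^ (-(1 / 2) : ℝ) ≤
      max (exp (-mutualInfo K W)) (exp (-condEntropy K W)) := by
  have : Nonempty 𝒦 := (nonempty_of_isProbabilityMeasure (ℙ : Measure Ω)).map K
  have hcard : (0 : ℝ) < Fintype.card 𝒦 := by exact_mod_cast Fintype.card_pos
  have hsum : mutualInfo K W + condEntropy K W ≤ log (Fintype.card 𝒦) :=
    (mutualInfo_add_condEntropy K W).trans_le (entropy_le_log_card hK)
  rw [rpow_def_of_pos hcard, ← exp_monotone.map_max, exp_le_exp]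
  apply le_max_of_two_nsmul_le_add
  rw [two_nsmul]
  linarith

/-- **Simmons' deception bound.** In the noiseless message-authentication model, assuming the
impersonation bound `P_I ≥ exp (-I[K:W])` and the substitution bound `P_S ≥ exp (-H[K|W])`,
the deception probability satisfies `max P_I P_S ≥ (card 𝒦) ^ (-1/2)`. -/
theorem deception_lower_bound
    {Ω : Type*} [MeasureSpace Ω] [IsProbabilityMeasure (ℙ : Measure Ω)]
    {𝒦 ℳ 𝒲 : Type*} [Fintype 𝒦] [Nonempty 𝒦] [Fintype ℳ] [Nonempty ℳ]
    [Fintype 𝒲] [Nonempty 𝒲]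
    [MeasurableSpace 𝒦] [MeasurableSingletonClass 𝒦]
    [MeasurableSpace ℳ] [MeasurableSingletonClass ℳ]
    (K : Ω → 𝒦) (M : Ω → ℳ) (hK : Measurable K) (hM : Measurable M)
    (hKM : IndepFun K M ℙ)
    (f : 𝒦 → ℳ → 𝒲) (hf : ∀ k, Function.Injective (f k))
    (W : Ω → 𝒲) (hW : ∀ ω, W ω = f (K ω) (M ω))
    (P_I P_S : ℝ)
    (hPI : P_I = ⨆ w : 𝒲, (ℙ {ω | ∃ m, f (K ω) m = w}).toReal)
    (hPS : P_S = ∑ w : 𝒲, (ℙ (W ⁻¹' {w})).toReal *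
      ⨆ w' : {w' : 𝒲 // w' ≠ w},
        ((ℙ[|W ⁻¹' {w}]) {ω | ∃ m, f (K ω) m = (w' : 𝒲)}).toReal)
    (hI : P_I ≥ Real.exp (-(mutualInfo K W)))
    (hS : P_S ≥ Real.exp (-(condEntropy K W))) :
    max P_I P_S ≥ (Fintype.card 𝒦 : ℝ) ^ (-(1 / 2) : ℝ) :=
  (deception_lower_bound_general hK W).trans (max_le_max hI hS)
end
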